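/- Let F₃ be the free group on generators a, b, c, let r = a·b·a⁻¹·b⁻¹·c, and let N be the normal closure of r in F₃. For w ∈ N define the combinatorial area A(w) as the least d such that w can be written as a product of d conjugates of r or r⁻¹, and define the (a,b)-length l(w) as the number of occurrences of a^{±1} and b^{±1} in a cyclic reduction of w. Then A(w) ≤ l(w)/2 for every w ∈ N. -/

import Mathlib

namespace PS

abbrev F3 := FreeGroup (Fin 3)

def a : F3 := FreeGroup.of 0
def b : F3 := FreeGroup.of 1
def c : F3 := FreeGroup.of 2

def r : F3 := a * b * a⁻¹ * b⁻¹ * c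

def N : Subgroup F3 := Subgroup.normalClosure {r}

/-- Combinatorial area: least `d` such that `w` is a product of `d` conjugates of `r` or `r⁻¹`. -/
noncomputable def area (w : F3) : ℕ :=
  sInf {d | ∃ g : Fin d → F3, ∃ ε : Fin d → ℤ, (∀ i, ε i = 1 ∨ ε i = -1) ∧
    w = (List.ofFn fun i => g i * r ^ ε i * (g i)⁻¹).prod}

/-- Number of occurrences of `a^{±1}, b^{±1}` in the reduced word of `w`. -/
def abCount (w : F3) : ℕ :=
  (w.toWord.filter fun p => decide (p.1 ≠ 2)).length

/-- `(a,b)`-length: occurrences of `a^{±1}, b^{±1}` in a cyclic reduction of `w`, realized as the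
minimum of `abCount` over the conjugacy class of `w`. -/
noncomputable def abLen (w : F3) : ℕ :=
  sInf {n | ∃ g : F3, abCount (g * w * g⁻¹) = n}

/-- Letters of the free group on `a, b` (capitals are inverses). -/
inductive Lt | a | A | b | B
deriving DecidableEq

/-- Letters of the free group on `a, b, c` (capitals are inverses). -/
inductive Mt | a | A | b | B | c | C
deriving DecidableEq

def Lt.inv : Lt → Lt
  | .a => .A | .A => .a | .b => .B | .B => .b

/-- left multiplication of a reduced word by a letter -/
def push (x : Lt) : List Lt → List Lt
  | [] => [x]
  | y :: l => if y = x.inv then l else x :: y :: l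

def Red (l : List Lt) : Prop := l.IsChain (fun x y => y ≠ x.inv)

lemma Lt.inv_inv (x : Lt) : x.inv.inv = x := by cases x <;> rfl

lemma red_push (x : Lt) (l : List Lt) (h : Red l) : Red (push x l) := by
  unfold Red at *
  cases l with
  | nil => simp [push]
  | cons y l =>
    simp only [push]
    split_ifs with hy
    · exact h.tail
    · exact List.isChain_cons_cons.2 ⟨hy, h⟩

lemma push_push (x : Lt) (l : List Lt) (h : Red l) : push x (push x.inv l) = l := by
  unfold Red at *
  cases l with
  | nil => simp [push]
  | cons y l =>
    simp only [push, Lt.inv_inv]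
    split_ifs with hy
    · subst hy
      cases l with
      | nil => rfl
      | cons z l =>
        have := (List.isChain_cons_cons.1 h).1
        simp [push, this]
    · simp [push]

abbrev RL := {l : List Lt // Red l}

def pperm (x : Lt) : Equiv.Perm RL where
  toFun l := ⟨push x l.1, red_push x _ l.2⟩
  invFun l := ⟨push x.inv l.1, red_push _ _ l.2⟩
  left_inv l := by
    apply Subtype.ext
    have := push_push x.inv l.1 l.2
    rwa [Lt.inv_inv] at this
  right_inv l := Subtype.ext (push_push x l.1 l.2)

def img : List Mt → List Lt
  | [] => []
  | .a :: w => push .a (img w)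
  | .A :: w => push .A (img w)
  | .b :: w => push .b (img w)
  | .B :: w => push .B (img w)
  | .c :: w => push .b (push .a (push .B (push .A (img w))))
  | .C :: w => push .a (push .b (push .A (push .B (img w))))

def evl : Mt → F3
  | .a => a | .A => a⁻¹ | .b => b | .B => b⁻¹ | .c => c | .C => c⁻¹

def ev (w : List Mt) : F3 := (w.map evl).prod

lemma ev_cons (x : Mt) (w : List Mt) : ev (x :: w) = evl x * ev w := by simp [ev]
lemma ev_append (v w : List Mt) : ev (v ++ w) = ev v * ev w := by simp [ev]

def rho : F3 →* Equiv.Perm RL :=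
  FreeGroup.lift ![pperm .a, pperm .b, pperm .b * pperm .a * (pperm .b)⁻¹ * (pperm .a)⁻¹]

lemma rho_a : rho a = pperm .a := by simp [rho, a]
lemma rho_b : rho b = pperm .b := by simp [rho, b]
lemma rho_c : rho c = pperm .b * pperm .a * (pperm .b)⁻¹ * (pperm .a)⁻¹ := by simp [rho, c]

lemma rho_N (w : F3) (h : w ∈ N) : rho w = 1 := by
  have : N ≤ rho.ker := by
    apply Subgroup.normalClosure_le_normal
    intro x hx
    rw [Set.mem_singleton_iff] at hx
    subst hx
    change rho r = 1
    simp only [r, map_mul, map_inv, rho_a, rho_b, rho_c]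
    group
  exact this h

lemma img_eq (w : List Mt) : (rho (ev w) ⟨[], List.IsChain.nil⟩).1 = img w := by
  induction w with
  | nil => simp [ev, img]
  | cons x w ih =>
    rw [ev_cons, map_mul]
    cases x <;>
      simp only [evl, map_inv, rho_a, rho_b, rho_c, img, ← ih, mul_inv_rev, inv_inv] <;> rfl

lemma img_nil (w : List Mt) (h : ev w ∈ N) : img w = [] := by
  rw [← img_eq, rho_N _ h]; rfl

lemma img_red (w : List Mt) : Red (img w) := by
  rw [← img_eq]; exact Subtype.property _

/-- Rewriting rules: free cancellations, and replacing three `a,b`-letters of `r` by one. -/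
inductive Rule : List Mt → List Mt → ℕ → Prop
  | aA : Rule [.a, .A] [] 0
  | Aa : Rule [.A, .a] [] 0
  | bB : Rule [.b, .B] [] 0
  | Bb : Rule [.B, .b] [] 0
  | cC : Rule [.c, .C] [] 0
  | Cc : Rule [.C, .c] [] 0
  | abA : Rule [.a, .b, .A] [.C, .b] 1
  | bAB : Rule [.b, .A, .B] [.A, .C] 1
  | ABca : Rule [.A, .B, .c, .a] [.B] 1
  | Bcab : Rule [.B, .c, .a, .b] [.a] 1
  | baB : Rule [.b, .a, .B] [.c, .a] 1
  | aBA : Rule [.a, .B, .A] [.B, .c] 1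
  | BACb : Rule [.B, .A, .C, .b] [.A] 1
  | ACba : Rule [.A, .C, .b, .a] [.b] 1

def Good (w : List Mt) : Prop := ∀ u p v q k, Rule p q k → w ≠ u ++ p ++ v

lemma Good.tail {x : Mt} {w : List Mt} (h : Good (x :: w)) : Good w := by
  intro u p v q k hr e
  exact h (x :: u) p v q k hr (by simp [e])

lemma Good.pre {w : List Mt} (h : Good w) {p q k} (hr : Rule p q k) (v : List Mt) : w ≠ p ++ v :=
  h [] p v q k hr

/-- Where the endpoint of a good word starting with given letters lies. -/
def Claim : List Mt → List Lt → Prop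
  | [], _ => True
  | .a :: w, l => ∃ z, l = .a :: z ∧ (∀ t, z ≠ .b :: .A :: t) ∧
      ((∀ t, w ≠ .B :: t) → ∀ t, z ≠ .B :: t) ∧ ((∀ t, w ≠ .b :: t) → ∀ t, z ≠ .b :: .b :: t)
  | .b :: w, l => ∃ z, l = .b :: z ∧ (∀ t, z ≠ .a :: .B :: t) ∧
      ((∀ t, w ≠ .A :: t) → ∀ t, z ≠ .A :: t) ∧ ((∀ t, w ≠ .a :: t) → ∀ t, z ≠ .a :: .a :: t)
  | .c :: w, l => ∃ z, l = .b :: .a :: z ∧ ((∀ t, w ≠ .a :: t) → ∃ t, z = .B :: t) ∧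
      ((∀ t, w ≠ .a :: .b :: t) → ∀ t, z ≠ .b :: t)
  | .C :: w, l => ∃ z, l = .a :: .b :: z ∧ ((∀ t, w ≠ .b :: t) → ∃ t, z = .A :: t) ∧
      ((∀ t, w ≠ .b :: .a :: t) → ∀ t, z ≠ .a :: t)
  | .B :: w, l => l ≠ [] ∧ (∀ t, l ≠ .b :: t) ∧ (∀ t, l ≠ .a :: .b :: t) ∧
      ((∀ t, w ≠ .A :: t) → ∀ t, l ≠ .A :: t) ∧
      (∀ t, l = .a :: t → ∃ w', w = .c :: w' ∧
        ((∀ s, w' ≠ .a :: s) → ∃ s, t = .B :: s))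
  | .A :: w, l => l ≠ [] ∧ (∀ t, l ≠ .a :: t) ∧ (∀ t, l ≠ .b :: .a :: t) ∧
      ((∀ t, w ≠ .B :: t) → ∀ t, l ≠ .B :: t) ∧
      (∀ t, l = .b :: t → ∃ w', w = .C :: w' ∧
        ((∀ s, w' ≠ .b :: s) → ∃ s, t = .A :: s))

set_option maxHeartbeats 4000000 in
lemma claim (w : List Mt) (h : Good w) : Claim w (img w) := by
  induction w with
  | nil => trivial
  | cons x w ih =>
    have ih := ih h.tail
    have hred := img_red w
    have h1 := h.pre .aA
    have h2 := h.pre .Aa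
    have h3 := h.pre .bB
    have h4 := h.pre .Bb
    have h5 := h.pre .cC
    have h6 := h.pre .Cc
    have g1 := h.pre .abA
    have g2 := h.pre .bAB
    have g3 := h.pre .ABca
    have g4 := h.pre .Bcab
    have g5 := h.pre .baB
    have g6 := h.pre .aBA
    have g7 := h.pre .BACb
    have g8 := h.pre .ACba
    clear h
    simp only [List.cons_append, List.nil_append] at *
    cases w with
    | nil =>
      cases x <;> simp [img, push, Claim, Lt.inv]
    | cons y w =>
      cases x <;> simp only [img.eq_2, img.eq_3, img.eq_4, img.eq_5, img.eq_6, img.eq_7] <;>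
      generalize img (y :: w) = l at * <;>
      cases y <;> simp only [Claim] at ih ⊢ <;>
      first
      | exact absurd rfl (h1 _)
      | exact absurd rfl (h2 _)
      | exact absurd rfl (h3 _)
      | exact absurd rfl (h4 _)
      | exact absurd rfl (h5 _)
      | exact absurd rfl (h6 _)
      | skip
      all_goals clear h1 h2 h3 h4 h5 h6
      all_goals rename_i ih0; clear ih0
      all_goals unfold Red at hred
      all_goals simp only [ne_eq, List.cons.injEq, reduceCtorEq, false_and, and_false, true_and,
        not_false_eq_true, implies_true] at g1 g2 g3 g4 g5 g6 g7 g8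
      all_goals
        rcases l with _ | ⟨l1, l⟩ <;> [skip; cases l1] <;>
        simp only [reduceCtorEq, false_and, and_false, exists_false, ne_eq, not_true_eq_false, not_false_eq_true, List.cons.injEq, true_and, implies_true, forall_eq', 
        IsEmpty.forall_iff, exists_eq_left'] at ih
      all_goals
        rcases l with _ | ⟨l1, _ | ⟨l2, l⟩⟩ <;> [skip; cases l1; (cases l1 <;> cases l2)] <;>
          simp_all [push, Lt.inv]

lemma exists_rule (w : List Mt) (h : img w = []) (hw : w ≠ []) :
    ∃ u p v q k, Rule p q k ∧ w = u ++ p ++ v := by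
  by_contra hc
  have hg : Good w := by
    intro u p v q k hr e
    exact hc ⟨u, p, v, q, k, hr, e⟩
  have := claim w hg
  rw [h] at this
  cases w with
  | nil => exact hw rfl
  | cons x w => cases x <;> simp [Claim] at this

/-- `w` is a product of `d` conjugates of `r` or `r⁻¹`. -/
inductive HasArea : ℕ → F3 → Prop
  | one : HasArea 0 1
  | mul {d w} (g : F3) (e : ℤ) (he : e = 1 ∨ e = -1) (h : HasArea d w) :
      HasArea (d + 1) (g * r ^ e * g⁻¹ * w)

lemma HasArea.conj {d w} (h : HasArea d w) (x : F3) : HasArea d (x * w * x⁻¹) := by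
  induction h with
  | one => simpa using HasArea.one
  | mul g e he _ ih =>
    have := HasArea.mul (x * g) e he ih
    convert this using 1
    group

lemma HasArea.area_le {d w} (h : HasArea d w) : area w ≤ d := by
  apply Nat.sInf_le
  induction h with
  | one => exact ⟨Fin.elim0, Fin.elim0, fun i => i.elim0, by simp⟩
  | mul g e he _ ih =>
    obtain ⟨g', e', he', hw⟩ := ih
    refine ⟨Fin.cons g g', Fin.cons e e', ?_, ?_⟩
    · intro i
      refine Fin.cases ?_ (fun j => ?_) i
      · simpa using he
      · simpa using he' j
    · rw [List.ofFn_succ, List.prod_cons]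
      simp only [Fin.cons_zero, Fin.cons_succ]
      rw [← hw]

def isab : Mt → Bool
  | .c => false | .C => false | _ => true

def cnt (w : List Mt) : ℕ := w.countP isab

lemma Rule.zero {p q k} (h : Rule p q k) : q.length < p.length ∧ cnt q + 2 * k ≤ cnt p := by
  cases h <;> decide

lemma Rule.ev_eq {p q k} (h : Rule p q k) :
    (k = 0 ∧ ev p = ev q) ∨ (k = 1 ∧ ∃ g : F3, ∃ e : ℤ, (e = 1 ∨ e = -1) ∧
      ev p = g * r ^ e * g⁻¹ * ev q) := by
  cases h
  case aA => left; simp [ev, evl]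
  case Aa => left; simp [ev, evl]
  case bB => left; simp [ev, evl]
  case Bb => left; simp [ev, evl]
  case cC => left; simp [ev, evl]
  case Cc => left; simp [ev, evl]
  case abA => exact .inr ⟨rfl, 1, 1, by simp, by simp [ev, evl, r]; group⟩
  case bAB => exact .inr ⟨rfl, a⁻¹, 1, by simp, by simp [ev, evl, r]; group⟩
  case ABca => exact .inr ⟨rfl, b⁻¹ * a⁻¹, 1, by simp, by simp [ev, evl, r]; group⟩
  case Bcab => exact .inr ⟨rfl, b⁻¹ * c, 1, by simp, by simp [ev, evl, r]; group⟩
  case baB => exact .inr ⟨rfl, c, -1, by simp, by simp [ev, evl, r]; group⟩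
  case aBA => exact .inr ⟨rfl, b⁻¹ * c, -1, by simp, by simp [ev, evl, r]; group⟩
  case BACb => exact .inr ⟨rfl, b⁻¹ * a⁻¹, -1, by simp, by simp [ev, evl, r]; group⟩
  case ACba => exact .inr ⟨rfl, a⁻¹, -1, by simp, by simp [ev, evl, r]; group⟩

lemma r_conj_mem (g : F3) (e : ℤ) : g * r ^ e * g⁻¹ ∈ N := by
  have : N.Normal := Subgroup.normalClosure_normal
  exact this.conj_mem _ (N.zpow_mem (Subgroup.subset_normalClosure rfl) e) g

lemma main (n : ℕ) : ∀ w : List Mt, w.length = n → ev w ∈ N →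
    ∃ d, 2 * d ≤ cnt w ∧ HasArea d (ev w) := by
  induction n using Nat.strong_induction_on with
  | _ n ih =>
    intro w hn hw
    by_cases h0 : w = []
    · subst h0
      exact ⟨0, by simp, HasArea.one⟩
    obtain ⟨u, p, v, q, k, hr, rfl⟩ := exists_rule w (img_nil w hw) h0
    obtain ⟨hlen, hcnt⟩ := hr.zero
    have hlen' : (u ++ q ++ v).length < n := by
      rw [← hn]; simp only [List.length_append]; omega
    have hcnt' : cnt (u ++ q ++ v) + 2 * k ≤ cnt (u ++ p ++ v) := by
      simp only [cnt, List.countP_append] at *; omega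
    rcases hr.ev_eq with ⟨rfl, he⟩ | ⟨rfl, g, e, he, hev⟩
    · have hE : ev (u ++ p ++ v) = ev (u ++ q ++ v) := by simp [ev_append, he]
      rw [hE] at hw ⊢
      obtain ⟨d, hd, ha⟩ := ih _ hlen' _ rfl hw
      exact ⟨d, by omega, ha⟩
    · have hE : ev (u ++ p ++ v) = (ev u * g) * r ^ e * (ev u * g)⁻¹ * ev (u ++ q ++ v) := by
        simp only [ev_append, hev]; group
      rw [hE] at hw ⊢
      obtain ⟨d, hd, ha⟩ := ih _ hlen' _ rfl
        ((Subgroup.mul_mem_cancel_left N (r_conj_mem _ _)).1 hw)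
      exact ⟨d + 1, by omega, HasArea.mul _ _ he ha⟩

def toMt : Fin 3 × Bool → Mt
  | (0, true) => .a | (0, false) => .A | (1, true) => .b | (1, false) => .B
  | (2, true) => .c | (2, false) => .C

lemma cnt_toMt (l : List (Fin 3 × Bool)) :
    cnt (l.map toMt) = (l.filter fun p => decide (p.1 ≠ 2)).length := by
  rw [← List.countP_eq_length_filter, cnt, List.countP_map]
  congr 1
  funext ⟨i, e⟩
  fin_cases i <;> cases e <;> rfl

lemma ev_toMt (l : List (Fin 3 × Bool)) : ev (l.map toMt) = FreeGroup.mk l := by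
  induction l with
  | nil => rfl
  | cons x l ih =>
    rw [List.map_cons, ev_cons, ih]
    have : FreeGroup.mk (x :: l) = FreeGroup.mk [x] * FreeGroup.mk l := by
      rw [FreeGroup.mul_mk]; rfl
    rw [this]
    congr 1
    obtain ⟨i, e⟩ := x
    fin_cases i <;> cases e <;> rfl

lemma area_conj (w x : F3) (h : w ∈ N) : 2 * area w ≤ abCount (x * w * x⁻¹) := by
  have hn : N.Normal := Subgroup.normalClosure_normal
  have e : ev ((x * w * x⁻¹).toWord.map toMt) = x * w * x⁻¹ := by
    rw [ev_toMt, FreeGroup.mk_toWord]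
  obtain ⟨d, hd, ha⟩ := main _ ((x * w * x⁻¹).toWord.map toMt) rfl
    (by rw [e]; exact hn.conj_mem _ h x)
  rw [e] at ha
  have := (ha.conj x⁻¹).area_le
  rw [show x⁻¹ * (x * w * x⁻¹) * x⁻¹⁻¹ = w by group] at this
  rw [cnt_toMt] at hd
  unfold abCount
  omega

end PS

open PS in
theorem stmt_0 : ∀ w ∈ N, (area w : ℝ) ≤ (abLen w : ℝ) / 2 := by
  intro w hw
  have hne : {n | ∃ g : F3, abCount (g * w * g⁻¹) = n}.Nonempty := ⟨_, 1, rfl⟩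
  obtain ⟨g, hg⟩ := Nat.sInf_mem hne
  have h := area_conj w g hw
  rw [hg] at h
  have h2 : 2 * area w ≤ abLen w := h
  have h3 : (2 : ℝ) * area w ≤ abLen w := by exact_mod_cast h2
  linarith
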